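/- Let G be a countable group of uniform local polynomial volume-growth of degree d (every finitely generated subgroup has polynomial volume-growth of degree at most d) and let Φ = {id}. Then G has Φ-bounded packing: there exists k (one may take k = 2·12^d) such that for every finite set B_0 ⊆ G there is a finite symmetric set B ⊇ B_0 ∪ {1_G} with the property that |T| ≤ k whenever T ⊆ B^6 and (T T^{-1} \ {1_G}) ∩ B = ∅. -/

import Mathlib

open scoped Pointwise

open Filter Finset

/-!
Choose a length function on `G` that comes from a Hilbert space, and let `B` be one of its balls.
In a Hilbert space three points of a ball of radius `s` cannot be pairwise more than `√3 s` apart,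
so if `B` is the ball of radius `√3 s`, the balls of radius `s` around the points of a `B`-separated
set `T ⊆ B ^ n` cover every point at most twice. They lie in the ball of radius `(n √3 + 1) s`,
which bounds `#T` by twice the growth ratio of the length between the radii `s` and `(n √3 + 1) s`.
For `n = 6` the factor `6 √3 + 1 < 12` leaves room for `12 ^ d`, whereas packing disjoint balls in
the word metric only gives the factor `13`.

The Hilbert space is `ℓ²(G)`, and the length of `g` is the distance by which `g` translates a tent
function of the word length, at a scale `q` where the word growth is doubling. This length is
bounded on generators, and its ball of radius comparable to `q` stays inside a word ball of radius
`4 q`; polynomial growth then forces a good ratio at some scale in between.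
-/

section Displacement

variable {G E : Type*} [Group G] [NormedAddCommGroup E]

/-- The length function `g ↦ ‖ρ g v - v‖` of a linear isometric action `ρ` and a vector `v`. Its
balls are the packing sets `B` of the theorem. -/
def displacement [NormedSpace ℝ E] (ρ : G →* (E →ₗᵢ[ℝ] E)) (v : E) : GroupSeminorm G where
  toFun g := ‖ρ g v - v‖
  map_one' := by simp
  mul_le' g h := by
    calc ‖ρ (g * h) v - v‖ = ‖(ρ g v - v) + ρ g (ρ h v - v)‖ := by simp
      _ ≤ ‖ρ g v - v‖ + ‖ρ h v - v‖ := by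
        simpa only [(ρ g).norm_map] using norm_add_le (ρ g v - v) (ρ g (ρ h v - v))
  inv' g := by
    rw [← (ρ g).norm_map, map_sub, ← Function.comp_apply (f := ρ g), ← LinearIsometry.coe_mul,
      ← map_mul, mul_inv_cancel, map_one, LinearIsometry.coe_one, id, norm_sub_rev]

theorem displacement_apply [NormedSpace ℝ E] (ρ : G →* (E →ₗᵢ[ℝ] E)) (v : E) (g : G) :
    displacement ρ v g = ‖ρ g v - v‖ := rfl

theorem displacement_div [NormedSpace ℝ E] (ρ : G →* (E →ₗᵢ[ℝ] E)) (v : E) (g h : G) :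
    displacement ρ v (g / h) = ‖ρ g⁻¹ v - ρ h⁻¹ v‖ := by
  rw [displacement_apply, ← (ρ g⁻¹).norm_map, map_sub, ← Function.comp_apply (f := ρ g⁻¹),
    ← LinearIsometry.coe_mul, ← map_mul, div_eq_mul_inv, inv_mul_cancel_left, norm_sub_rev]

theorem displacement_smul [NormedSpace ℝ E] (ρ : G →* (E →ₗᵢ[ℝ] E)) (r : ℝ) (v : E) (g : G) :
    displacement ρ (r • v) g = |r| * displacement ρ v g := by
  simp only [displacement_apply, map_smul, ← smul_sub, norm_smul, Real.norm_eq_abs]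

theorem displacement_sq_of_inner_eq_zero [InnerProductSpace ℝ E] (ρ : G →* (E →ₗᵢ[ℝ] E)) {v : E}
    {g : G} (h : inner ℝ (ρ g v) v = 0) : displacement ρ v g ^ 2 = 2 * ‖v‖ ^ 2 := by
  rw [displacement_apply, norm_sub_sq_real, h, (ρ g).norm_map]
  ring

theorem map_le_mul_of_mem_pow [DecidableEq G] (L : GroupSeminorm G) {B : Finset G} {r : ℝ}
    (hB : ∀ g ∈ B, L g ≤ r) (n : ℕ) : ∀ g ∈ B ^ n, L g ≤ n * r := by
  induction n with
  | zero => simp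
  | succ n ih =>
    intro g hg
    rw [pow_succ] at hg
    obtain ⟨a, ha, b, hb, rfl⟩ := mem_mul.1 hg
    calc L (a * b) ≤ L a + L b := map_mul_le_add L a b
      _ ≤ n * r + r := add_le_add (ih a ha) (hB b hb)
      _ = (n + 1 : ℕ) * r := by push_cast; ring

end Displacement

section Packing

variable {G E : Type*} [Group G] [NormedAddCommGroup E] [InnerProductSpace ℝ E]

theorem norm_sub_sq_add_norm_sub_sq_add_norm_sub_sq_le (a b c : E) :
    ‖a - b‖ ^ 2 + ‖a - c‖ ^ 2 + ‖b - c‖ ^ 2 ≤ 3 * (‖a‖ ^ 2 + ‖b‖ ^ 2 + ‖c‖ ^ 2) := by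
  have hsum := sq_nonneg ‖a + b + c‖
  rw [norm_add_sq_real, norm_add_sq_real, inner_add_left] at hsum
  rw [norm_sub_sq_real, norm_sub_sq_real, norm_sub_sq_real]
  linarith

theorem card_le_two_of_separated {ι : Type*} {p : ι → E} {y : E} {s : ℝ} {T : Finset ι}
    (hball : ∀ t ∈ T, ‖y - p t‖ ≤ s)
    (hsep : (T : Set ι).Pairwise fun t₁ t₂ => √3 * s < ‖p t₁ - p t₂‖) : #T ≤ 2 := by
  by_contra! hcard
  obtain ⟨a, b, c, ha, hb, hc, hab, hac, hbc⟩ := two_lt_card_iff.1 hcard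
  have hs : 0 ≤ s := (norm_nonneg _).trans (hball a ha)
  have near {t : ι} (ht : t ∈ T) : ‖y - p t‖ ^ 2 ≤ s ^ 2 := by
    gcongr
    exact hball t ht
  have far {t₁ t₂ : ι} (h₁ : t₁ ∈ T) (h₂ : t₂ ∈ T) (hne : t₁ ≠ t₂) :
      3 * s ^ 2 < ‖(y - p t₁) - (y - p t₂)‖ ^ 2 := by
    rw [sub_sub_sub_cancel_left, norm_sub_rev]
    calc 3 * s ^ 2 = (√3 * s) ^ 2 := by rw [mul_pow, Real.sq_sqrt zero_le_three]
      _ < ‖p t₁ - p t₂‖ ^ 2 := by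
        gcongr
        exact hsep h₁ h₂ hne
  linarith [norm_sub_sq_add_norm_sub_sq_add_norm_sub_sq_le (y - p a) (y - p b) (y - p c),
    near ha, near hb, near hc, far ha hb hab, far ha hc hac, far hb hc hbc]

variable [DecidableEq G] (ρ : G →* (E →ₗᵢ[ℝ] E)) (v : E)

theorem card_mul_card_le_two_mul_card_mul {s : ℝ} {S T : Finset G}
    (hS : ∀ g ∈ S, displacement ρ v g ≤ s)
    (hT : (T : Set G).Pairwise fun t₁ t₂ => √3 * s < displacement ρ v (t₁ / t₂)) :
    #T * #S ≤ 2 * #(S * T) := by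
  classical
  rw [mul_comm 2]
  refine card_mul_le_card_mul (fun t y => displacement ρ v (y / t) ≤ s) (fun t ht => ?_)
    fun y _ => card_le_two_of_separated (p := fun t => ρ t⁻¹ v) (y := ρ y⁻¹ v) (s := s) ?_ ?_
  · rw [← card_image_of_injective S (mul_left_injective t)]
    refine card_le_card (image_subset_iff.2 fun b hb => mem_filter.2 ⟨mul_mem_mul hb ht, ?_⟩)
    simpa only [mul_div_cancel_right] using hS b hb
  · intro t ht
    rw [← displacement_div]
    exact ((mem_bipartiteBelow _).1 ht).2
  · intro t₁ h₁ t₂ h₂ hne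
    rw [← displacement_div]
    exact hT ((mem_bipartiteBelow _).1 h₁).1 ((mem_bipartiteBelow _).1 h₂).1 hne

theorem card_le_two_mul_of_ncard_ball_le {s R : ℝ} (hs : 0 ≤ s) {n N : ℕ}
    (hR : n * (√3 * s) + s ≤ R) (hfin : {g | displacement ρ v g ≤ R}.Finite)
    (hN : {g | displacement ρ v g ≤ R}.ncard ≤ N * {g | displacement ρ v g ≤ s}.ncard)
    {B T : Finset G} (hB : ∀ g, g ∈ B ↔ displacement ρ v g ≤ √3 * s) (hTB : T ⊆ B ^ n)
    (hsep : (T : Set G).Pairwise fun t₁ t₂ => t₁ / t₂ ∉ B) : #T ≤ 2 * N := by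
  have hsR : s ≤ R := le_trans (le_add_of_nonneg_left (by positivity)) hR
  lift {g | displacement ρ v g ≤ R} to Finset G using hfin with U hU
  have hSfin : {g | displacement ρ v g ≤ s}.Finite :=
    U.finite_toSet.subset (hU ▸ fun g hg => hg.trans hsR)
  lift {g | displacement ρ v g ≤ s} to Finset G using hSfin with S hS
  have mem_U (g : G) : g ∈ U ↔ displacement ρ v g ≤ R := Set.ext_iff.1 hU g
  have mem_S (g : G) : g ∈ S ↔ displacement ρ v g ≤ s := Set.ext_iff.1 hS g
  rw [Set.ncard_coe_finset, Set.ncard_coe_finset] at hN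
  have hSTU : S * T ⊆ U := mul_subset_iff.2 fun g hg t ht => (mem_U _).2 <| by
    linarith [map_mul_le_add (displacement ρ v) g t, (mem_S g).1 hg,
      map_le_mul_of_mem_pow (displacement ρ v) (fun b => (hB b).1) n t (hTB ht)]
  have hpos : 0 < #S := card_pos.2 ⟨1, (mem_S 1).2 (by rwa [map_one_eq_zero])⟩
  refine Nat.le_of_mul_le_mul_right (c := #S) ?_ hpos
  calc #T * #S ≤ 2 * #(S * T) :=
        card_mul_card_le_two_mul_card_mul ρ v (fun g => (mem_S g).1)
          (hsep.imp fun t₁ t₂ h => lt_of_not_ge fun hle => h ((hB _).2 hle))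
    _ ≤ 2 * (N * #S) := by grw [card_le_card hSTU, hN]
    _ = 2 * N * #S := (mul_assoc _ _ _).symm

end Packing

section LeftRegular

variable {G : Type*} [Group G]

theorem lp_norm_sq_eq_tsum_sq {ι : Type*} (f : lp (fun _ : ι => ℝ) 2) :
    ‖f‖ ^ 2 = ∑' x, f x ^ 2 := by
  simpa using lp.norm_rpow_eq_tsum (by norm_num) f

/-- The left regular representation `(g • f) x = f (g⁻¹ * x)` of `G` on `ℓ²(G)`, the source of the
Hilbertian length functions on `G`. -/
noncomputable def leftRegular : G →* (lp (fun _ : G => ℝ) 2 →ₗᵢ[ℝ] lp (fun _ : G => ℝ) 2) where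
  toFun g :=
    { toFun f := ⟨fun x => f (g⁻¹ * x), memℓp_gen <|
        (Equiv.mulLeft g⁻¹).summable_iff.2 ((lp.memℓp f).summable (by norm_num))⟩
      map_add' _ _ := rfl
      map_smul' _ _ := rfl
      norm_map' f := by
        refine (sq_eq_sq₀ (norm_nonneg _) (norm_nonneg _)).1 ?_
        rw [lp_norm_sq_eq_tsum_sq, lp_norm_sq_eq_tsum_sq]
        exact (Equiv.mulLeft g⁻¹).tsum_eq fun x => f x ^ 2 }
  map_one' := by
    ext f x
    exact congrArg f (by simp)
  map_mul' g h := by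
    ext f x
    exact congrArg f (by simp [mul_assoc])

theorem leftRegular_apply (g : G) (f : lp (fun _ : G => ℝ) 2) (x : G) :
    leftRegular g f x = f (g⁻¹ * x) := rfl

theorem displacement_leftRegular_sq_le {f : lp (fun _ : G => ℝ) 2} {S : Finset G}
    (hf : ∀ x ∉ S, f x = 0) {g : G} {δ : ℝ} (hg : ∀ x, |f (g⁻¹ * x) - f x| ≤ δ) :
    displacement leftRegular f g ^ 2 ≤ 2 * #S * δ ^ 2 := by
  classical
  have hzero : ∀ x ∉ S ∪ g • S, (f (g⁻¹ * x) - f x) ^ 2 = 0 := by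
    intro x hx
    rw [mem_union, not_or, ← inv_smul_mem_iff, smul_eq_mul] at hx
    rw [hf _ hx.1, hf _ hx.2, sub_zero, zero_pow two_ne_zero]
  calc displacement leftRegular f g ^ 2 = ∑' x, (f (g⁻¹ * x) - f x) ^ 2 :=
        lp_norm_sq_eq_tsum_sq (leftRegular g f - f)
    _ = ∑ x ∈ S ∪ g • S, (f (g⁻¹ * x) - f x) ^ 2 := tsum_eq_sum hzero
    _ ≤ #(S ∪ g • S) • δ ^ 2 :=
        sum_le_card_nsmul _ _ _ fun x _ => sq_le_sq.2 ((hg x).trans (le_abs_self δ))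
    _ ≤ (#S + #(g • S)) • δ ^ 2 := by grw [card_union_le]
    _ = 2 * #S * δ ^ 2 := by rw [card_smul_finset, ← two_mul, nsmul_eq_mul]; norm_cast

theorem displacement_leftRegular_sq_of_disjoint {f : lp (fun _ : G => ℝ) 2} {g : G}
    (hg : ∀ x, f (g⁻¹ * x) = 0 ∨ f x = 0) :
    displacement leftRegular f g ^ 2 = 2 * ‖f‖ ^ 2 := by
  refine displacement_sq_of_inner_eq_zero _ ?_
  have hterm (x : G) : inner ℝ (leftRegular g f x) (f x) = 0 := by
    rw [leftRegular_apply]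
    rcases hg x with h | h <;> simp [h]
  simp only [lp.inner_eq_tsum, hterm, tsum_zero]

end LeftRegular

section Tent

variable {G : Type*} [Group G] [DecidableEq G] {A : Finset G}

/-- The tent function `x ↦ max (n - |x|) 0` in `ℓ²(G)`, where `|x|` is the word length with respect
to `A ∋ 1`. It is encoded by counting the `k < n` with `x ∈ A ^ k`, so that no word length has to be
defined for elements outside the subgroup generated by `A`. -/
noncomputable def tent (hA : 1 ∈ A) (n : ℕ) : lp (fun _ : G => ℝ) 2 :=
  ⟨fun x => #{k ∈ range n | x ∈ A ^ k}, Memℓp.of_exponent_ge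
    (memℓp_zero <| (A ^ n).finite_toSet.subset fun x hx => by
      obtain ⟨k, hk⟩ := card_ne_zero.1 (Nat.cast_ne_zero.1 hx)
      rw [mem_filter, mem_range] at hk
      exact pow_subset_pow_right hA hk.1.le hk.2) zero_le⟩

theorem tent_apply (hA : 1 ∈ A) (n : ℕ) (x : G) :
    tent hA n x = #{k ∈ range n | x ∈ A ^ k} := rfl

theorem tent_eq_zero (hA : 1 ∈ A) {n : ℕ} {x : G} (hx : x ∉ A ^ n) : tent hA n x = 0 := by
  rw [tent_apply, Nat.cast_eq_zero, card_eq_zero, filter_eq_empty_iff]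
  exact fun k hk hxk => hx (pow_subset_pow_right hA (mem_range.1 hk).le hxk)

theorem sub_le_tent (hA : 1 ∈ A) (n : ℕ) {k : ℕ} {x : G} (hx : x ∈ A ^ k) :
    (n : ℝ) - k ≤ tent hA n x := by
  rw [tent_apply, sub_le_iff_le_add]
  norm_cast
  refine Nat.sub_le_iff_le_add.1 ?_
  rw [← Nat.card_Ico]
  refine card_le_card fun j hj => ?_
  rw [mem_Ico] at hj
  exact mem_filter.2 ⟨mem_range.2 hj.2, pow_subset_pow_right hA hj.1 hx⟩

theorem tent_le_tent_mul_add_one (hA : 1 ∈ A) (n : ℕ) {a : G} (ha : a ∈ A) (x : G) :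
    tent hA n x ≤ tent hA n (a * x) + 1 := by
  have hcard : #{k ∈ range n | x ∈ A ^ k} ≤ #{k ∈ range n | a * x ∈ A ^ k} + 1 := by
    rw [← card_image_of_injective _ Nat.succ_injective]
    refine le_trans (card_le_card (image_subset_iff.2 fun k hk => ?_)) (card_insert_le n _)
    rw [mem_filter, mem_range] at hk
    rw [mem_insert, mem_filter, mem_range, Nat.succ_eq_add_one, pow_succ']
    exact (Nat.succ_le_of_lt hk.1).eq_or_lt.imp id fun hlt => ⟨hlt, mul_mem_mul ha hk.2⟩
  exact (Nat.cast_le.2 hcard).trans_eq (Nat.cast_succ _)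

theorem abs_tent_mul_sub_tent_le (hA : 1 ∈ A) (hinv : A⁻¹ = A) (n : ℕ) {a : G} (ha : a ∈ A)
    (x : G) : |tent hA n (a * x) - tent hA n x| ≤ 1 := by
  have hup := tent_le_tent_mul_add_one hA n ha x
  have hdown := tent_le_tent_mul_add_one hA n (hinv ▸ inv_mem_inv ha) (a * x)
  rw [inv_mul_cancel_left] at hdown
  exact abs_sub_le_iff.2 ⟨by linarith, by linarith⟩

theorem sq_mul_card_le_norm_tent_sq (hA : 1 ∈ A) (q : ℕ) :
    (q : ℝ) ^ 2 * #(A ^ q) ≤ ‖tent hA (2 * q)‖ ^ 2 := by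
  have hle : ∀ x ∈ A ^ q, (q : ℝ) ^ 2 ≤ ‖tent hA (2 * q) x‖ ^ (2 : ENNReal).toReal := by
    intro x hx
    have hx := sub_le_tent hA (2 * q) hx
    push_cast at hx
    rw [ENNReal.toReal_ofNat, Real.rpow_ofNat]
    exact pow_le_pow_left₀ (by positivity) (le_trans (by linarith) (Real.le_norm_self _)) 2
  calc (q : ℝ) ^ 2 * #(A ^ q) = #(A ^ q) • (q : ℝ) ^ 2 := by rw [nsmul_eq_mul, mul_comm]
    _ ≤ ∑ x ∈ A ^ q, ‖tent hA (2 * q) x‖ ^ (2 : ENNReal).toReal := card_nsmul_le_sum _ _ _ hle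
    _ ≤ ‖tent hA (2 * q)‖ ^ (2 : ENNReal).toReal := lp.sum_rpow_le_norm_rpow (by norm_num) _ _
    _ = ‖tent hA (2 * q)‖ ^ 2 := by simp

theorem displacement_tent_sq_le (hA : 1 ∈ A) (hinv : A⁻¹ = A) (n : ℕ) {a : G} (ha : a ∈ A) :
    displacement leftRegular (tent hA n) a ^ 2 ≤ 2 * #(A ^ n) := by
  simpa using displacement_leftRegular_sq_le (fun x => tent_eq_zero hA)
    (abs_tent_mul_sub_tent_le hA hinv n (hinv ▸ inv_mem_inv ha))

theorem le_displacement_tent_sq (hA : 1 ∈ A) (hinv : A⁻¹ = A) {q : ℕ} {g : G}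
    (hg : g ∉ A ^ (4 * q)) :
    2 * ((q : ℝ) ^ 2 * #(A ^ q)) ≤ displacement leftRegular (tent hA (2 * q)) g ^ 2 := by
  rw [displacement_leftRegular_sq_of_disjoint]
  · gcongr
    exact sq_mul_card_le_norm_tent_sq hA q
  intro x
  by_contra! hx
  have hgx : g⁻¹ * x ∈ A ^ (2 * q) := not_imp_comm.1 (tent_eq_zero hA) hx.1
  have hx' : x ∈ A ^ (2 * q) := not_imp_comm.1 (tent_eq_zero hA) hx.2
  have hxg : x⁻¹ * g ∈ A ^ (2 * q) := by
    simpa [← inv_pow, hinv] using inv_mem_inv hgx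
  refine hg ?_
  rw [show 4 * q = 2 * q + 2 * q by ring, pow_add, ← mul_inv_cancel_left x g]
  exact mul_mem_mul hx' hxg

theorem exists_displacement_ball_subset_pow (hA : 1 ∈ A) (hinv : A⁻¹ = A) {q : ℕ} (hq : q ≠ 0)
    {K : ℝ} (hK : 0 ≤ K) (hdouble : (#(A ^ (2 * q)) : ℝ) < K ^ 2 * #(A ^ q)) :
    ∃ v : lp (fun _ : G => ℝ) 2, (∀ a ∈ A, displacement leftRegular v a ≤ 1) ∧
      ∀ g, K * displacement leftRegular v g ≤ q → g ∈ A ^ (4 * q) := by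
  obtain ⟨r, hr, hrsq⟩ : ∃ r : ℝ, 0 < r ∧ r ^ 2 = 2 * #(A ^ (2 * q)) := by
    have hpos : 0 < #(A ^ (2 * q)) := card_pos.2 ⟨1, one_mem_pow hA⟩
    exact ⟨√(2 * #(A ^ (2 * q))), by positivity, Real.sq_sqrt (by positivity)⟩
  have hsmul (g : G) : displacement leftRegular (r⁻¹ • tent hA (2 * q)) g =
      displacement leftRegular (tent hA (2 * q)) g / r := by
    rw [displacement_smul, abs_of_pos (inv_pos.2 hr), inv_mul_eq_div]
  refine ⟨r⁻¹ • tent hA (2 * q), fun a ha => ?_, fun g hg => ?_⟩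
  · rw [hsmul, div_le_one hr]
    exact le_of_sq_le_sq ((displacement_tent_sq_le hA hinv _ ha).trans_eq hrsq.symm) hr.le
  · by_contra hmem
    rw [hsmul, ← mul_div_assoc, div_le_iff₀ hr] at hg
    have hfar := le_displacement_tent_sq hA hinv hmem
    have hlt : (q * r) ^ 2 < (q * r) ^ 2 := by
      calc (q * r) ^ 2 = (q : ℝ) ^ 2 * (2 * #(A ^ (2 * q))) := by rw [mul_pow, hrsq]
        _ < q ^ 2 * (2 * (K ^ 2 * #(A ^ q))) := by gcongr
        _ = K ^ 2 * (2 * (q ^ 2 * #(A ^ q))) := by ring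
        _ ≤ K ^ 2 * displacement leftRegular (tent hA (2 * q)) g ^ 2 := by gcongr
        _ = (K * displacement leftRegular (tent hA (2 * q)) g) ^ 2 := (mul_pow _ _ _).symm
        _ ≤ (q * r) ^ 2 := by
          have := apply_nonneg (displacement leftRegular (tent hA (2 * q))) g
          gcongr
    exact hlt.false

end Tent

section Scales

theorem exists_lt_apply_mul_lt_mul {v : ℕ → ℝ} (hv : ∀ n, 0 < v n) {c : ℝ} {d : ℕ}
    (hc : ∀ r : ℕ, 1 ≤ r → v r ≤ c * (r : ℝ) ^ d) {b : ℕ} (hb : 0 < b) {K : ℝ}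
    (hK : (b : ℝ) ^ d < K) (Q : ℕ) : ∃ q, Q < q ∧ v (b * q) < K * v q := by
  by_contra! hfail
  have hbd : (0 : ℝ) < (b : ℝ) ^ d := by positivity
  have hpow (j : ℕ) : K ^ j * v (Q + 1) ≤ v (b ^ j * (Q + 1)) := by
    induction j with
    | zero => simp
    | succ j ih =>
      have hQ : Q < b ^ j * (Q + 1) := Nat.le_mul_of_pos_left _ (by positivity)
      calc K ^ (j + 1) * v (Q + 1) = K * (K ^ j * v (Q + 1)) := by ring
        _ ≤ K * v (b ^ j * (Q + 1)) := mul_le_mul_of_nonneg_left ih (hbd.trans hK).le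
        _ ≤ v (b * (b ^ j * (Q + 1))) := hfail _ hQ
        _ = v (b ^ (j + 1) * (Q + 1)) := by rw [pow_succ', mul_assoc]
  obtain ⟨j, hj⟩ := pow_unbounded_of_one_lt (c * (Q + 1 : ℝ) ^ d / v (Q + 1))
    ((one_lt_div hbd).2 hK)
  rw [div_pow, div_lt_div_iff₀ (hv _) (by positivity)] at hj
  have hle := (hpow j).trans (hc _ (Nat.one_le_iff_ne_zero.2 (by positivity)))
  push_cast at hle
  refine hj.not_ge (hle.trans_eq ?_)
  rw [mul_pow, ← pow_mul, ← pow_mul, mul_comm j d]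
  ring

theorem eventually_mul_pow_pow_lt {x y : ℝ} (hx : 0 ≤ x) (hxy : x < y) (C : ℝ) (d : ℕ) :
    ∀ᶠ m : ℕ in atTop, C * (x ^ m) ^ d < (y ^ m) ^ d + m := by
  rcases eq_or_ne d 0 with rfl | hd
  · filter_upwards [tendsto_natCast_atTop_atTop.eventually_gt_atTop C] with m hm
    simpa using hm.trans (lt_one_add (m : ℝ))
  · have hlittle := (isLittleO_pow_pow_of_lt_left (pow_nonneg hx d)
      (pow_lt_pow_left₀ hxy hx hd)).const_mul_left C
    filter_upwards [hlittle.bound one_pos, eventually_gt_atTop 0] with m hm hm0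
    have hy : 0 ≤ (y ^ d) ^ m := pow_nonneg (pow_nonneg (hx.trans hxy.le) d) m
    rw [one_mul, Real.norm_of_nonneg hy] at hm
    rw [pow_right_comm x, pow_right_comm y]
    have : (0 : ℝ) < m := Nat.cast_pos.2 hm0
    linarith [Real.le_norm_self (C * (x ^ d) ^ m)]

theorem exists_apply_succ_le_mul {V : ℕ → ℕ} {N m : ℕ} (hN : 1 ≤ N) (h0 : 1 ≤ V 0)
    (hm : V m < N ^ m + m) : ∃ i < m, V (i + 1) ≤ N * V i := by
  by_contra! hfail
  have hlow : ∀ i ≤ m, N ^ i + i ≤ V i := by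
    intro i
    induction i with
    | zero => simpa using h0
    | succ i ih =>
      intro hi
      calc N ^ (i + 1) + (i + 1) ≤ N * (N ^ i + i) + 1 := by rw [pow_succ']; nlinarith
        _ ≤ N * V i + 1 := by grw [ih (by omega)]
        _ ≤ V (i + 1) := hfail i hi
  exact hm.not_ge (hlow m le_rfl)

theorem exists_ncard_sublevel_mul_le {α : Type*} {L : α → ℝ} {x₀ : α} (hx₀ : L x₀ ≤ 1) {b : ℝ}
    (hb : 1 ≤ b) {N m : ℕ} (hN : 1 ≤ N) {U : Finset α} (hU : ∀ x, L x ≤ b ^ m → x ∈ U)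
    (hcard : #U < N ^ m + m) :
    ∃ s, 1 ≤ s ∧ {x | L x ≤ b * s}.Finite ∧
      {x | L x ≤ b * s}.ncard ≤ N * {x | L x ≤ s}.ncard := by
  have hsub {i : ℕ} (hi : i ≤ m) : {x | L x ≤ b ^ i} ⊆ ↑U :=
    fun x hx => hU x (hx.trans (pow_le_pow_right₀ hb hi))
  have hfin {i : ℕ} (hi : i ≤ m) : {x | L x ≤ b ^ i}.Finite := U.finite_toSet.subset (hsub hi)
  have hzero : 1 ≤ {x | L x ≤ b ^ 0}.ncard :=
    (Set.ncard_pos (hfin m.zero_le)).2 ⟨x₀, by simpa using hx₀⟩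
  have htop : {x | L x ≤ b ^ m}.ncard < N ^ m + m := by
    refine lt_of_le_of_lt ?_ hcard
    simpa using Set.ncard_le_ncard (hsub le_rfl) U.finite_toSet
  obtain ⟨i, him, hi⟩ :=
    exists_apply_succ_le_mul (V := fun i => {x | L x ≤ b ^ i}.ncard) hN hzero htop
  rw [pow_succ'] at hi
  exact ⟨b ^ i, one_le_pow₀ hb, pow_succ' b i ▸ hfin him, hi⟩

end Scales

section PolynomialGrowth

variable {G : Type*} [Group G] [DecidableEq G] {A : Finset G}

theorem exists_displacement_ncard_ball_le (hA : 1 ∈ A) (hinv : A⁻¹ = A) {c : ℝ} {d : ℕ}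
    (hc : ∀ r : ℕ, 1 ≤ r → (#(A ^ r) : ℝ) ≤ c * (r : ℝ) ^ d) {b : ℝ} (hb : 1 < b) {N : ℕ}
    (hbN : b < N) :
    ∃ (v : lp (fun _ : G => ℝ) 2) (s : ℝ), 1 ≤ s ∧ (∀ a ∈ A, displacement leftRegular v a ≤ 1) ∧
      {g | displacement leftRegular v g ≤ b * s}.Finite ∧
      {g | displacement leftRegular v g ≤ b * s}.ncard ≤
        N ^ d * {g | displacement leftRegular v g ≤ s}.ncard := by
  have hb0 : 0 < b := one_pos.trans hb
  have hc0 : 0 ≤ c := by simpa using (Nat.cast_nonneg _).trans (hc 1 le_rfl)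
  obtain ⟨K, hK, hdK⟩ : ∃ K : ℝ, 0 < K ∧ ((2 : ℕ) : ℝ) ^ d < K ^ 2 :=
    ⟨√(2 ^ d + 1), by positivity, by rw [Real.sq_sqrt (by positivity)]; norm_num⟩
  obtain ⟨M, hM⟩ := eventually_atTop.1
    (eventually_mul_pow_pow_lt hb0.le hbN (c * (4 * K * b) ^ d) d)
  obtain ⟨Q, hQ⟩ := exists_nat_gt (b ^ M * K)
  obtain ⟨q, hQq, hdouble⟩ := exists_lt_apply_mul_lt_mul (v := fun r => (#(A ^ r) : ℝ))
    (fun r => Nat.cast_pos.2 (card_pos.2 ⟨1, one_mem_pow hA⟩)) hc two_pos hdK Q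
  have hMq : b ^ M < q / K := (lt_div_iff₀ hK).2 (hQ.trans (Nat.cast_lt.2 hQq))
  obtain ⟨m, hmq, hqm⟩ := exists_nat_pow_near ((one_le_pow₀ hb.le).trans hMq.le) hb
  have hMm : M ≤ m := Nat.lt_succ_iff.1 ((pow_lt_pow_iff_right₀ hb).1 (hMq.trans hqm))
  obtain ⟨v, hv, hball⟩ :=
    exists_displacement_ball_subset_pow hA hinv (Nat.ne_zero_of_lt hQq) hK.le hdouble
  have hcard : #(A ^ (4 * q)) < (N ^ d) ^ m + m := by
    suffices (#(A ^ (4 * q)) : ℝ) < ((N ^ d) ^ m + m : ℕ) from Nat.cast_lt.1 this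
    calc (#(A ^ (4 * q)) : ℝ) ≤ c * ((4 * q : ℕ) : ℝ) ^ d := hc _ (by omega)
      _ ≤ c * (4 * (b ^ (m + 1) * K)) ^ d := by
        push_cast
        gcongr
        exact ((div_lt_iff₀ hK).1 hqm).le
      _ = c * (4 * K * b) ^ d * (b ^ m) ^ d := by rw [mul_assoc c, ← mul_pow, pow_succ]; ring
      _ < ((N ^ d) ^ m + m : ℕ) := by
        push_cast
        rw [pow_right_comm (N : ℝ)]
        exact hM m hMm
  obtain ⟨s, hs, hfin, hratio⟩ := exists_ncard_sublevel_mul_le (x₀ := 1)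
    (by simp) hb.le (Nat.one_le_pow _ _ (Nat.cast_pos.1 (hb0.trans hbN)))
    (fun g hg => hball g ((le_div_iff₀' hK).1 (hg.trans hmq))) hcard
  exact ⟨v, s, hs, hv, hfin, hratio⟩

theorem exists_superset_separated_card_le (hA : 1 ∈ A) (hinv : A⁻¹ = A) {c : ℝ} {d : ℕ}
    (hc : ∀ r : ℕ, 1 ≤ r → (#(A ^ r) : ℝ) ≤ c * (r : ℝ) ^ d) {n N : ℕ} (hN : n * √3 + 1 < N) :
    ∃ B : Finset G, A ⊆ B ∧ B⁻¹ = B ∧ ∀ T ⊆ B ^ n,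
      (T : Set G).Pairwise (fun t₁ t₂ => t₁ / t₂ ∉ B) → #T ≤ 2 * N ^ d := by
  have hsqrtN : √3 < N := by
    have hN1 : 1 < N := Nat.one_lt_cast.1 ((le_add_of_nonneg_left (by positivity)).trans_lt hN)
    calc √3 < 2 := (Real.sqrt_lt' two_pos).2 (by norm_num)
      _ ≤ N := Nat.ofNat_le_cast.2 hN1
  obtain ⟨b, hmax, hbN⟩ := exists_between (max_lt hN hsqrtN)
  obtain ⟨hnb, hsqrt⟩ := max_lt_iff.1 hmax
  have hb : 1 < b := (le_add_of_nonneg_left (by positivity)).trans_lt hnb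
  obtain ⟨v, s, hs, hv, hfin, hratio⟩ := exists_displacement_ncard_ball_le hA hinv hc hb hbN
  have hs0 : 0 ≤ s := zero_le_one.trans hs
  have hBfin : {g | displacement leftRegular v g ≤ √3 * s}.Finite :=
    hfin.subset fun g hg => hg.trans (mul_le_mul_of_nonneg_right hsqrt.le hs0)
  lift {g | displacement leftRegular v g ≤ √3 * s} to Finset G using hBfin with B hB
  have mem_B (g : G) : g ∈ B ↔ displacement leftRegular v g ≤ √3 * s := Set.ext_iff.1 hB g
  refine ⟨B, fun a ha => ?_, ?_, fun T hT hsep => ?_⟩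
  · exact (mem_B a).2 ((hv a ha).trans (one_le_mul_of_one_le_of_one_le (by simp) hs))
  · ext g
    rw [mem_inv', mem_B, mem_B, map_inv_eq_map]
  · refine card_le_two_mul_of_ncard_ball_le leftRegular v hs0 ?_ hfin hratio mem_B hT hsep
    calc n * (√3 * s) + s = (n * √3 + 1) * s := by ring
      _ ≤ b * s := by gcongr

end PolynomialGrowth

theorem stmt3_general {G : Type*} [Group G] [DecidableEq G] (d : ℕ)
    (hgrowth : ∀ B : Finset G, (1 : G) ∈ B → B⁻¹ = B →
      ∃ c : ℝ, 0 < c ∧ ∀ r : ℕ, 1 ≤ r → ((B ^ r).card : ℝ) ≤ c * (r : ℝ) ^ d)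
    {n N : ℕ} (hN : n * √3 + 1 < N) :
    ∀ B₀ : Finset G, ∃ B : Finset G, B₀ ⊆ B ∧ (1 : G) ∈ B ∧ B⁻¹ = B ∧
      ∀ T : Finset G, T ⊆ B ^ n →
        (∀ t₁ ∈ T, ∀ t₂ ∈ T, t₁ * t₂⁻¹ ≠ 1 → t₁ * t₂⁻¹ ∉ B) →
        T.card ≤ 2 * N ^ d := by
  intro B₀
  have hA : 1 ∈ insert 1 (B₀ ∪ B₀⁻¹) := mem_insert_self _ _
  have hinv : (insert 1 (B₀ ∪ B₀⁻¹))⁻¹ = insert 1 (B₀ ∪ B₀⁻¹) := by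
    ext x
    simp [or_comm]
  obtain ⟨c, -, hc⟩ := hgrowth _ hA hinv
  obtain ⟨B, hAB, hBinv, hB⟩ := exists_superset_separated_card_le hA hinv hc hN
  refine ⟨B, (subset_union_left.trans (subset_insert _ _)).trans hAB, hAB hA, hBinv,
    fun T hT hsep => hB T hT fun t₁ h₁ t₂ h₂ hne => ?_⟩
  simpa only [div_eq_mul_inv] using hsep t₁ h₁ t₂ h₂ (mul_inv_eq_one.not.2 hne)

/-- A countable group of uniform local polynomial volume-growth of degree `d`
has `{id}`-bounded packing with constant `k = 2·12^d`. -/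
theorem stmt3 {G : Type*} [Group G] [Countable G] [DecidableEq G] (d : ℕ)
    (hgrowth : ∀ B : Finset G, (1 : G) ∈ B → B⁻¹ = B →
      ∃ c : ℝ, 0 < c ∧ ∀ r : ℕ, 1 ≤ r → ((B ^ r).card : ℝ) ≤ c * (r : ℝ) ^ d) :
    ∀ B₀ : Finset G, ∃ B : Finset G, B₀ ⊆ B ∧ (1 : G) ∈ B ∧ B⁻¹ = B ∧
      ∀ T : Finset G, T ⊆ B ^ 6 →
        (∀ t₁ ∈ T, ∀ t₂ ∈ T, t₁ * t₂⁻¹ ≠ 1 → t₁ * t₂⁻¹ ∉ B) →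
        T.card ≤ 2 * 12 ^ d := by
  have hsqrt : √3 < 11 / 6 := (Real.sqrt_lt' (by norm_num)).2 (by norm_num)
  exact stmt3_general d hgrowth (by push_cast; linarith)
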